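/- Let z₁ < ⋯ < z_K (K ≥ 2) be a grid with Cramér projection Π_C. For any probability measure ν on ℝ supported on [z₁, z_K], the projection preserves the mean: ∫_ℝ x d(Π_C ν)(x) = ∫_ℝ x dν(x). -/

import Mathlib

open MeasureTheory Filter Set

noncomputable section

/-- The cumulative distribution function of a measure on ℝ. -/
def cdfFn (ν : Measure ℝ) (y : ℝ) : ℝ := (ν (Set.Iic y)).toReal

/-- The Cramér distance `ℓ₂` between two measures on ℝ. -/
def cramerDist (ν₁ ν₂ : Measure ℝ) : ℝ :=
  Real.sqrt (∫ x, (cdfFn ν₁ x - cdfFn ν₂ x) ^ 2)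

/-- The hat functions associated with the grid `z 0 < z 1 < ⋯ < z (K-1)`. -/
def hatFn (K : ℕ) (z : ℕ → ℝ) (i : ℕ) (x : ℝ) : ℝ :=
  if i = 0 ∧ x ≤ z 0 then 1
  else if i = K - 1 ∧ z (K - 1) ≤ x then 1
  else if i + 1 < K ∧ z i ≤ x ∧ x ≤ z (i + 1) then (z (i + 1) - x) / (z (i + 1) - z i)
  else if 0 < i ∧ z (i - 1) ≤ x ∧ x ≤ z i then (x - z (i - 1)) / (z i - z (i - 1))
  else 0

/-- The Cramér projection onto the grid `z 0 < z 1 < ⋯ < z (K-1)`. -/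
def cramerProj (K : ℕ) (z : ℕ → ℝ) (ν : Measure ℝ) : Measure ℝ :=
  ∑ i ∈ Finset.range K, (ENNReal.ofReal (∫ w, hatFn K z i w ∂ν)) • Measure.dirac (z i)

/-- The distributional Bellman operator. -/
def bellmanOp {X A : Type} [Fintype X] [Fintype A] [MeasurableSpace X] [MeasurableSpace A]
    (γ : ℝ) (p : X × A → Measure (ℝ × X)) (pol : X → Measure A)
    (η : X × A → Measure ℝ) (xa : X × A) : Measure ℝ :=
  (p xa).bind (fun rx' => ∑ a' : A, (pol rx'.2 {a'}) • (η (rx'.2, a')).map (fun t => rx'.1 + γ * t))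

/-- The supremum-Cramér metric between return distribution functions. -/
def supCramer {X A : Type} [Fintype X] [Fintype A] (η μ : X × A → Measure ℝ) : ℝ :=
  ⨆ xa : X × A, cramerDist (η xa) (μ xa)

/-- Square-integrable tails of the CDF. -/
def sqIntTails (ν : Measure ℝ) : Prop :=
  IntegrableOn (fun x => (cdfFn ν x) ^ 2) (Set.Iic 0) ∧
  IntegrableOn (fun x => (1 - cdfFn ν x) ^ 2) (Set.Ici 0)

theorem aux_mono (K : ℕ) (z : ℕ → ℝ) (hz : ∀ i, i + 1 < K → z i < z (i + 1)) :
    ∀ b a, a < b → b < K → z a < z b := by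
  intro b
  induction b with
  | zero => intro a h; omega
  | succ b ih =>
    intro a hab hb
    have h1 := hz b hb
    rcases Nat.lt_succ_iff_lt_or_eq.mp hab with h | h
    · exact (ih a h (by omega)).trans h1
    · rw [h]; exact h1

theorem aux_find (K : ℕ) (z : ℕ → ℝ) (x : ℝ) (h0 : z 0 ≤ x) :
    ∀ n, x ≤ z (n + 1) → ∃ j, j ≤ n ∧ z j ≤ x ∧ x ≤ z (j + 1) := by
  intro n
  induction n with
  | zero => intro h; exact ⟨0, le_rfl, h0, h⟩
  | succ n ih =>
    intro h
    rcases le_total x (z (n + 1)) with h1 | h1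
    · obtain ⟨j, hj, h2⟩ := ih h1
      exact ⟨j, by omega, h2⟩
    · exact ⟨n + 1, le_rfl, h1, h⟩

theorem aux_left (K : ℕ) (z : ℕ → ℝ) (hz : ∀ i, i + 1 < K → z i < z (i + 1))
    (j : ℕ) (hj : j + 1 < K) (x : ℝ) (h1 : z j ≤ x) (h2 : x ≤ z (j + 1)) :
    hatFn K z j x = (z (j + 1) - x) / (z (j + 1) - z j) := by
  have h := hz j hj
  unfold hatFn
  split_ifs with a b c d
  · obtain ⟨rfl, hx⟩ := a
    have : x = z 0 := le_antisymm hx h1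
    rw [this, div_self (by linarith)]
  · omega
  · rfl
  · exact absurd ⟨hj, h1, h2⟩ c
  · exact absurd ⟨hj, h1, h2⟩ c

theorem aux_right (K : ℕ) (z : ℕ → ℝ) (hz : ∀ i, i + 1 < K → z i < z (i + 1))
    (j : ℕ) (hj : j + 1 < K) (x : ℝ) (h1 : z j ≤ x) (h2 : x ≤ z (j + 1)) :
    hatFn K z (j + 1) x = (x - z j) / (z (j + 1) - z j) := by
  have h := hz j hj
  unfold hatFn
  rw [if_neg (fun a => Nat.succ_ne_zero j a.1)]
  split_ifs with b c d
  · have : x = z (j + 1) := le_antisymm h2 (by rw [b.1]; exact b.2)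
    rw [this, div_self (by linarith)]
  · have : x = z (j + 1) := le_antisymm h2 c.2.1
    have h3 := hz _ c.1
    rw [this, div_self (by linarith), div_self (by linarith)]
  · rfl
  · exact absurd ⟨by omega, h1, h2⟩ d

theorem aux_zero (K : ℕ) (z : ℕ → ℝ) (hz : ∀ i, i + 1 < K → z i < z (i + 1))
    (j : ℕ) (hj : j + 1 < K) (x : ℝ) (h1 : z j ≤ x) (h2 : x ≤ z (j + 1))
    (i : ℕ) (hi : i < K) (hij : i ≠ j) (hij' : i ≠ j + 1) :
    hatFn K z i x = 0 := by
  have hm := aux_mono K z hz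
  have h := hz j hj
  unfold hatFn
  split_ifs with a b c d
  · have := hm j 0 (by omega) (by omega)
    linarith [a.2]
  · have := hm (K - 1) (j + 1) (by omega) (by omega)
    linarith [b.2]
  · rcases lt_or_gt_of_ne hij with hl | hl
    · have h3 : z (i + 1) ≤ z j := by
        rcases Nat.lt_or_eq_of_le (Nat.succ_le_of_lt hl) with h4 | h4
        · exact (hm _ _ h4 (by omega)).le
        · exact le_of_eq (congrArg z h4)
      have : z (i + 1) - x = 0 := by linarith [c.2.2]
      rw [this, zero_div]
    · have := hm i (j + 1) (by omega) hi
      linarith [c.2.1]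
  · rcases lt_or_gt_of_ne hij with hl | hl
    · have := hm j i hl (by omega)
      linarith [d.2.2]
    · have h3 : z (j + 1) ≤ z (i - 1) := by
        rcases Nat.lt_or_eq_of_le (show j + 1 ≤ i - 1 by omega) with h4 | h4
        · exact (hm _ _ h4 (by omega)).le
        · exact le_of_eq (congrArg z h4)
      have : x - z (i - 1) = 0 := by linarith [d.2.1]
      rw [this, zero_div]
  · rfl

theorem aux_sum (K : ℕ) (hK : 2 ≤ K) (z : ℕ → ℝ) (hz : ∀ i, i + 1 < K → z i < z (i + 1))
    (x : ℝ) (h0 : z 0 ≤ x) (h1 : x ≤ z (K - 1)) :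
    ∑ i ∈ Finset.range K, hatFn K z i x * z i = x := by
  obtain ⟨j, hj, h2, h3⟩ := aux_find K z x h0 (K - 2)
    (by rwa [show K - 2 + 1 = K - 1 by omega])
  have hj' : j + 1 < K := by omega
  have h := hz j hj'
  have hs : ∑ i ∈ ({j, j + 1} : Finset ℕ), hatFn K z i x * z i
      = ∑ i ∈ Finset.range K, hatFn K z i x * z i := by
    apply Finset.sum_subset
    · intro i hi
      simp only [Finset.mem_insert, Finset.mem_singleton] at hi
      simp only [Finset.mem_range]
      omega
    · intro i hi hi'
      simp only [Finset.mem_insert, Finset.mem_singleton, not_or] at hi'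
      rw [aux_zero K z hz j hj' x h2 h3 i (Finset.mem_range.mp hi) hi'.1 hi'.2, zero_mul]
  rw [← hs, Finset.sum_pair (by omega), aux_left K z hz j hj' x h2 h3,
    aux_right K z hz j hj' x h2 h3]
  have : z (j + 1) - z j ≠ 0 := by linarith
  field_simp
  ring

theorem aux_nonneg (K : ℕ) (z : ℕ → ℝ) (i : ℕ) (x : ℝ) : 0 ≤ hatFn K z i x := by
  unfold hatFn
  split_ifs with a b c d
  · exact zero_le_one
  · exact zero_le_one
  · exact div_nonneg (by linarith [c.2.2]) (by linarith [c.2.1, c.2.2])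
  · exact div_nonneg (by linarith [d.2.1]) (by linarith [d.2.1, d.2.2])
  · exact le_rfl

theorem aux_le_one (K : ℕ) (z : ℕ → ℝ) (i : ℕ) (x : ℝ) : hatFn K z i x ≤ 1 := by
  unfold hatFn
  split_ifs with a b c d
  · exact le_rfl
  · exact le_rfl
  · exact div_le_one_of_le₀ (by linarith [c.2.1]) (by linarith [c.2.1, c.2.2])
  · exact div_le_one_of_le₀ (by linarith [d.2.2]) (by linarith [d.2.1, d.2.2])
  · exact zero_le_one

theorem aux_meas (K : ℕ) (z : ℕ → ℝ) (i : ℕ) : Measurable (hatFn K z i) := by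
  unfold hatFn
  refine Measurable.ite ?_ measurable_const (Measurable.ite ?_ measurable_const
    (Measurable.ite ?_ (by fun_prop) (Measurable.ite ?_ (by fun_prop) measurable_const)))
  · exact (MeasurableSet.const _).inter measurableSet_Iic
  · exact (MeasurableSet.const _).inter measurableSet_Ici
  · exact (MeasurableSet.const _).inter (measurableSet_Ici.inter measurableSet_Iic)
  · exact (MeasurableSet.const _).inter (measurableSet_Ici.inter measurableSet_Iic)

theorem aux_int (K : ℕ) (z : ℕ → ℝ) (i : ℕ) (ν : Measure ℝ) [IsProbabilityMeasure ν] :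
    Integrable (hatFn K z i) ν := by
  refine Integrable.of_bound (aux_meas K z i).aestronglyMeasurable 1 (Eventually.of_forall ?_)
  intro x
  rw [Real.norm_eq_abs, abs_of_nonneg (aux_nonneg K z i x)]
  exact aux_le_one K z i x

/-- The Cramér projection preserves the mean of measures supported
on [z₁, z_K]. -/
theorem cramerProj_preserves_mean
    (K : ℕ) (hK : 2 ≤ K) (z : ℕ → ℝ) (hz : ∀ i, i + 1 < K → z i < z (i + 1))
    (ν : Measure ℝ) [IsProbabilityMeasure ν] (hν : ν (Set.Icc (z 0) (z (K - 1)))ᶜ = 0) :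
    ∫ x, x ∂(cramerProj K z ν) = ∫ x, x ∂ν := by
  unfold cramerProj
  rw [integral_finsetSum_measure]
  · have h1 : ∀ i ∈ Finset.range K,
        ∫ x, x ∂((ENNReal.ofReal (∫ w, hatFn K z i w ∂ν)) • Measure.dirac (z i))
          = ∫ w, hatFn K z i w * z i ∂ν := by
      intro i _
      rw [integral_smul_measure, integral_dirac,
        ENNReal.toReal_ofReal (integral_nonneg (aux_nonneg K z i)), integral_mul_const, smul_eq_mul]
    rw [Finset.sum_congr rfl h1, ← integral_finsetSum _ (fun i _ => (aux_int K z i ν).mul_const _)]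
    apply integral_congr_ae
    have h2 : ∀ᵐ x ∂ν, x ∈ Set.Icc (z 0) (z (K - 1)) := mem_ae_iff.mpr hν
    filter_upwards [h2] with x hx
    exact aux_sum K hK z hz x hx.1 hx.2
  · intro i _
    exact (integrable_dirac (by simp)).smul_measure ENNReal.ofReal_ne_top

end
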